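/- arXiv:1911.02806 — 2 statements merged into one kernel-verified Lean document; each statement's English description precedes it below -/
import Mathlib

section
/- Suppose E is the unique element of U + V₀ satisfying a(E, ψ) = ℓ(ψ) for all ψ ∈ M (i.e. any Ẽ ∈ U + V₀ with a(Ẽ, ψ) = ℓ(ψ) for all ψ ∈ M equals E). For each δ > 0 let (E_δ, F_δ) denote the unique solution of the QR mixed problem. Then for every sequence (δ_n) of positive reals with δ_n → 0, one has E_{δ_n} → E and F_{δ_n} → 0 in the norm of H. (Abstract form of the convergence part of Theorem 3.2.) -/
open ComplexConjugate Filter Topology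

local notation "⟪" x ", " y "⟫" => @inner ℂ _ _ x y

/-!
Write `e = E_δ - E ∈ V₀`. Testing the first equation with `e` and the second with `F_δ` gives the
energy identity `δ ‖e‖² + ‖F_δ‖² = -δ Re ⟪e, E⟫`, so `e` stays bounded and `F_δ → 0`. Hence
`a(e, ψ) = ⟪ψ, F_δ⟫ → 0` for each `ψ ∈ M`. Uniqueness of `E` says that the functionals `a(·, ψ)`
separate the points of `V₀`, so the bounded family `e` converges weakly to `0`; inserting this into
the energy identity yields `‖e‖² ≤ -Re ⟪e, E⟫ → 0`.
-/

section WeakConvergence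

variable {𝕜 K ι : Type*} [RCLike 𝕜] [NormedAddCommGroup K] [InnerProductSpace 𝕜 K]
  {l : Filter ι} {e : ι → K}

variable (𝕜 l e) in
/-- The test vectors against which the family `e` tends weakly to zero along `l`. They form a
submodule, and weak convergence of `e` to zero means that it is everything. -/
def weaklyNullTestVectors : Submodule 𝕜 K where
  carrier := {w | Tendsto (fun i => inner 𝕜 w (e i)) l (𝓝 0)}
  add_mem' hx hy := by simpa [inner_add_left] using hx.add hy
  zero_mem' := by simp [tendsto_const_nhds]
  smul_mem' c x hx := by simpa [inner_smul_left] using hx.const_mul (conj c)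

theorem mem_weaklyNullTestVectors {w : K} :
    w ∈ weaklyNullTestVectors 𝕜 l e ↔ Tendsto (fun i => inner 𝕜 w (e i)) l (𝓝 0) :=
  Iff.rfl

theorem isClosed_weaklyNullTestVectors {B : ℝ} (he : ∀ i, ‖e i‖ ≤ B) :
    IsClosed (weaklyNullTestVectors 𝕜 l e : Set K) := by
  have h_lipschitz (i : ι) : LipschitzWith B.toNNReal fun w => inner 𝕜 w (e i) :=
    LipschitzWith.of_dist_le' fun v w => by
      rw [dist_eq_norm, dist_eq_norm, ← inner_sub_left, mul_comm]
      exact (norm_inner_le_norm _ _).trans (by gcongr; exact he i)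
  exact (LipschitzWith.uniformEquicontinuous _ _ h_lipschitz).equicontinuous
    |>.isClosed_setOfPred_tendsto continuous_const

theorem tendsto_dual_zero_of_separating [CompleteSpace K] {B : ℝ} (he : ∀ i, ‖e i‖ ≤ B)
    {s : Set (StrongDual 𝕜 K)} (h_sep : ∀ x, (∀ f ∈ s, f x = 0) → x = 0)
    (hs : ∀ f ∈ s, Tendsto (fun i => f (e i)) l (𝓝 0)) (g : StrongDual 𝕜 K) :
    Tendsto (fun i => g (e i)) l (𝓝 0) := by
  let riesz := (InnerProductSpace.toDual 𝕜 K).symm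
  have mem_iff (f : StrongDual 𝕜 K) :
      riesz f ∈ weaklyNullTestVectors 𝕜 l e ↔ Tendsto (fun i => f (e i)) l (𝓝 0) := by
    simp only [mem_weaklyNullTestVectors, riesz, InnerProductSpace.toDual_symm_apply]
  have h_orthogonal : (weaklyNullTestVectors 𝕜 l e)ᗮ = ⊥ := by
    refine (Submodule.eq_bot_iff _).2 fun x hx => h_sep x fun f hf => ?_
    rw [← InnerProductSpace.toDual_symm_apply]
    exact hx _ ((mem_iff f).2 (hs f hf))
  have h_top : weaklyNullTestVectors 𝕜 l e = ⊤ := by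
    rw [← (isClosed_weaklyNullTestVectors he).submodule_topologicalClosure_eq,
      Submodule.topologicalClosure_eq_top_iff, h_orthogonal]
  exact (mem_iff g).1 (h_top ▸ Submodule.mem_top)

end WeakConvergence

theorem tendsto_zero_of_norm_sq_le {X ι : Type*} [SeminormedAddCommGroup X] {l : Filter ι}
    {x : ι → X} {b : ι → ℝ} (hx : ∀ i, ‖x i‖ ^ 2 ≤ b i) (hb : Tendsto b l (𝓝 0)) :
    Tendsto x l (𝓝 0) :=
  squeeze_zero_norm (fun i => Real.le_sqrt_of_sq_le (hx i)) (by simpa using hb.sqrt)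

theorem isBoundedLinearMap_of_map_smul_add {𝕜 X Y : Type*} [NontriviallyNormedField 𝕜]
    [SeminormedAddCommGroup X] [NormedSpace 𝕜 X] [SeminormedAddCommGroup Y] [NormedSpace 𝕜 Y]
    {f : X → Y} (h_lin : ∀ (c : 𝕜) (u v : X), f (c • u + v) = c • f u + f v) (C : ℝ)
    (h_bound : ∀ u, ‖f u‖ ≤ C * ‖u‖) : IsBoundedLinearMap 𝕜 f := by
  have map_zero : f 0 = 0 := by simpa using h_lin 1 0 0
  refine IsLinearMap.with_bound ⟨fun u v => ?_, fun c u => ?_⟩ C h_bound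
  · simpa using h_lin 1 u v
  · simpa [map_zero] using h_lin c u 0

section QuasiReversibility

variable {𝕜 H : Type*} [RCLike 𝕜] [NormedAddCommGroup H] [InnerProductSpace 𝕜 H]

/-- `E` lies in `U + V₀` and satisfies `a(E, ψ) = ℓ(ψ)` on `M`: the problem that the
quasi-reversibility method regularizes. Only the values of `a` on `H × M` and of `ℓ` on `M` are
meaningful. -/
structure IsExactSolution (V₀ : Submodule 𝕜 H) (M : Set H) (a : H → H → 𝕜) (ℓ : H → 𝕜)
    (U E : H) : Prop where
  sub_mem : E - U ∈ V₀
  form_eq : ∀ ψ ∈ M, a E ψ = ℓ ψ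

theorem IsExactSolution.eq_zero_of_unique {V₀ : Submodule 𝕜 H} {M : Set H} {a : H → H → 𝕜}
    {ℓ : H → 𝕜} {U E : H} (hE : IsExactSolution V₀ M a ℓ U E)
    (ha : ∀ ψ ∈ M, IsLinearMap 𝕜 (a · ψ))
    (hE_unique : ∀ E', IsExactSolution V₀ M a ℓ U E' → E' = E)
    {x : H} (hx : x ∈ V₀) (hax : ∀ ψ ∈ M, a x ψ = 0) : x = 0 := by
  refine add_eq_right.1 (hE_unique (x + E) ⟨?_, fun ψ hψ => ?_⟩)
  · rw [add_sub_assoc]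
    exact V₀.add_mem hx hE.sub_mem
  · rw [(ha ψ hψ).map_add, hax ψ hψ, hE.form_eq ψ hψ, zero_add]

/-- `(Eδ, Fδ)` solves the mixed problem of the quasi-reversibility method with regularization
parameter `δ`. Mathlib's inner product is conjugate-linear in its first argument, so the paper's
`⟨x, y⟩` is `inner 𝕜 y x`. -/
structure IsQRSolution (V₀ : Submodule 𝕜 H) (M : Set H) (a : H → H → 𝕜) (ℓ : H → 𝕜) (U : H)
    (δ : ℝ) (Eδ Fδ : H) : Prop where
  sub_mem : Eδ - U ∈ V₀
  multiplier_mem : Fδ ∈ M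
  stationarity : ∀ φ ∈ V₀, (δ : 𝕜) * inner 𝕜 φ Eδ + conj (a φ Fδ) = 0
  constraint : ∀ ψ ∈ M, a Eδ ψ - inner 𝕜 ψ Fδ = ℓ ψ

namespace IsQRSolution

variable {V₀ : Submodule 𝕜 H} {M : Set H} {a : H → H → 𝕜} {ℓ : H → 𝕜} {U : H}

section PointwiseEstimates

variable {E Eδ Fδ : H} {δ : ℝ}

theorem error_mem (h : IsQRSolution V₀ M a ℓ U δ Eδ Fδ) (hE : IsExactSolution V₀ M a ℓ U E) :
    Eδ - E ∈ V₀ := by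
  simpa using V₀.sub_mem h.sub_mem hE.sub_mem

theorem form_error (h : IsQRSolution V₀ M a ℓ U δ Eδ Fδ)
    (ha : ∀ ψ ∈ M, IsLinearMap 𝕜 (a · ψ)) (hE : IsExactSolution V₀ M a ℓ U E)
    {ψ : H} (hψ : ψ ∈ M) : a (Eδ - E) ψ = inner 𝕜 ψ Fδ := by
  rw [(ha ψ hψ).map_sub, hE.form_eq ψ hψ, ← h.constraint ψ hψ, sub_sub_cancel]

theorem energy_identity (h : IsQRSolution V₀ M a ℓ U δ Eδ Fδ)
    (ha : ∀ ψ ∈ M, IsLinearMap 𝕜 (a · ψ)) (hE : IsExactSolution V₀ M a ℓ U E) :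
    δ * ‖Eδ - E‖ ^ 2 + ‖Fδ‖ ^ 2 = -(δ * RCLike.re (inner 𝕜 (Eδ - E) E)) := by
  have h_split : inner 𝕜 (Eδ - E) Eδ = inner 𝕜 (Eδ - E) (Eδ - E) + inner 𝕜 (Eδ - E) E := by
    rw [← inner_add_right, sub_add_cancel]
  have h_test := congrArg RCLike.re (h.stationarity (Eδ - E) (h.error_mem hE))
  rw [h.form_error ha hE h.multiplier_mem, inner_conj_symm, h_split, map_add,
    RCLike.re_ofReal_mul, map_add, inner_self_eq_norm_sq, inner_self_eq_norm_sq, map_zero] at h_test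
  linarith

theorem norm_error_sq_le (h : IsQRSolution V₀ M a ℓ U δ Eδ Fδ) (hδ : 0 < δ)
    (ha : ∀ ψ ∈ M, IsLinearMap 𝕜 (a · ψ)) (hE : IsExactSolution V₀ M a ℓ U E) :
    ‖Eδ - E‖ ^ 2 ≤ ‖inner 𝕜 E (Eδ - E)‖ := by
  have h_energy := h.energy_identity ha hE
  have h_scaled : δ * ‖Eδ - E‖ ^ 2 ≤ δ * -RCLike.re (inner 𝕜 (Eδ - E) E) := by
    linarith [sq_nonneg ‖Fδ‖]
  calc ‖Eδ - E‖ ^ 2 ≤ -RCLike.re (inner 𝕜 (Eδ - E) E) := le_of_mul_le_mul_left h_scaled hδ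
    _ ≤ |RCLike.re (inner 𝕜 (Eδ - E) E)| := neg_le_abs _
    _ ≤ ‖inner 𝕜 (Eδ - E) E‖ := RCLike.abs_re_le_norm _
    _ = ‖inner 𝕜 E (Eδ - E)‖ := norm_inner_symm _ _

theorem norm_error_le (h : IsQRSolution V₀ M a ℓ U δ Eδ Fδ) (hδ : 0 < δ)
    (ha : ∀ ψ ∈ M, IsLinearMap 𝕜 (a · ψ)) (hE : IsExactSolution V₀ M a ℓ U E) :
    ‖Eδ - E‖ ≤ ‖E‖ := by
  have h_sq : ‖Eδ - E‖ ^ 2 ≤ ‖E‖ * ‖Eδ - E‖ :=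
    (h.norm_error_sq_le hδ ha hE).trans (norm_inner_le_norm _ _)
  by_contra! h_lt
  nlinarith [norm_nonneg E]

theorem norm_multiplier_sq_le (h : IsQRSolution V₀ M a ℓ U δ Eδ Fδ) (hδ : 0 < δ)
    (ha : ∀ ψ ∈ M, IsLinearMap 𝕜 (a · ψ)) (hE : IsExactSolution V₀ M a ℓ U E) :
    ‖Fδ‖ ^ 2 ≤ δ * ‖E‖ ^ 2 :=
  calc ‖Fδ‖ ^ 2 ≤ δ * -RCLike.re (inner 𝕜 (Eδ - E) E) := by
        have : 0 ≤ δ * ‖Eδ - E‖ ^ 2 := by positivity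
        linarith [h.energy_identity ha hE]
    _ ≤ δ * (‖Eδ - E‖ * ‖E‖) := by
        gcongr
        exact (neg_le_abs _).trans ((RCLike.abs_re_le_norm _).trans (norm_inner_le_norm _ _))
    _ ≤ δ * ‖E‖ ^ 2 := by
        rw [sq]
        gcongr
        exact h.norm_error_le hδ ha hE

end PointwiseEstimates

section Convergence

variable {E : H} {ι : Type*} {l : Filter ι} {δ : ι → ℝ} {Eδ Fδ : ι → H}

theorem tendsto_multiplier (h : ∀ i, IsQRSolution V₀ M a ℓ U (δ i) (Eδ i) (Fδ i))
    (hδ_pos : ∀ i, 0 < δ i) (hδ_lim : Tendsto δ l (𝓝 0)) (ha : ∀ ψ ∈ M, IsLinearMap 𝕜 (a · ψ))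
    (hE : IsExactSolution V₀ M a ℓ U E) : Tendsto Fδ l (𝓝 0) := by
  refine tendsto_zero_of_norm_sq_le (fun i => (h i).norm_multiplier_sq_le (hδ_pos i) ha hE) ?_
  simpa using hδ_lim.mul_const (‖E‖ ^ 2)

theorem tendsto_inner_error [CompleteSpace V₀]
    (h : ∀ i, IsQRSolution V₀ M a ℓ U (δ i) (Eδ i) (Fδ i)) (hδ_pos : ∀ i, 0 < δ i)
    (hδ_lim : Tendsto δ l (𝓝 0)) (ha : ∀ ψ ∈ M, IsBoundedLinearMap 𝕜 (a · ψ))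
    (hE : IsExactSolution V₀ M a ℓ U E) (h_sep : ∀ x ∈ V₀, (∀ ψ ∈ M, a x ψ = 0) → x = 0) (w : H) :
    Tendsto (fun i => inner 𝕜 w (Eδ i - E)) l (𝓝 0) := by
  have ha_lin (ψ : H) (hψ : ψ ∈ M) : IsLinearMap 𝕜 (a · ψ) := (ha ψ hψ).toIsLinearMap
  let e (i : ι) : V₀ := ⟨Eδ i - E, (h i).error_mem hE⟩
  let functional (ψ : M) : StrongDual 𝕜 V₀ :=
    (ha ψ ψ.2).toContinuousLinearMap.comp V₀.subtypeL
  refine tendsto_dual_zero_of_separating (e := e) (s := Set.range functional)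
    (fun i => (h i).norm_error_le (hδ_pos i) ha_lin hE) (fun x hx => ?_) ?_
    ((innerSL 𝕜 w).comp V₀.subtypeL)
  · exact Subtype.ext (h_sep x x.2 fun ψ hψ => hx _ ⟨⟨ψ, hψ⟩, rfl⟩)
  · rintro _ ⟨ψ, rfl⟩
    have h_form (i : ι) : functional ψ (e i) = inner 𝕜 (ψ : H) (Fδ i) :=
      (h i).form_error ha_lin hE ψ.2
    simp only [h_form]
    simpa using tendsto_const_nhds.inner (𝕜 := 𝕜) (tendsto_multiplier h hδ_pos hδ_lim ha_lin hE)

end Convergence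

end IsQRSolution

theorem qr_convergence_general {V₀ : Submodule 𝕜 H} [CompleteSpace V₀] {M : Set H}
    {a : H → H → 𝕜} (ha : ∀ ψ ∈ M, IsBoundedLinearMap 𝕜 (a · ψ)) {ℓ : H → 𝕜} {U E : H}
    (hE : IsExactSolution V₀ M a ℓ U E)
    (hE_unique : ∀ E', IsExactSolution V₀ M a ℓ U E' → E' = E)
    {ι : Type*} {l : Filter ι} {δ : ι → ℝ} (hδ_pos : ∀ i, 0 < δ i) (hδ_lim : Tendsto δ l (𝓝 0))
    {Eδ Fδ : ι → H} (h : ∀ i, IsQRSolution V₀ M a ℓ U (δ i) (Eδ i) (Fδ i)) :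
    Tendsto Eδ l (𝓝 E) ∧ Tendsto Fδ l (𝓝 0) := by
  have ha_lin (ψ : H) (hψ : ψ ∈ M) : IsLinearMap 𝕜 (a · ψ) := (ha ψ hψ).toIsLinearMap
  have h_weak := IsQRSolution.tendsto_inner_error h hδ_pos hδ_lim ha hE
    (fun _ hx => hE.eq_zero_of_unique ha_lin hE_unique hx) E
  refine ⟨?_, IsQRSolution.tendsto_multiplier h hδ_pos hδ_lim ha_lin hE⟩
  rw [← tendsto_sub_nhds_zero_iff]
  exact tendsto_zero_of_norm_sq_le
    (fun i => (h i).norm_error_sq_le (hδ_pos i) ha_lin hE) (by simpa using h_weak.norm)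

end QuasiReversibility

/-- convergence of the QR method. If `E` is the unique element of `U + V₀`
with `a(E,ψ) = ℓ(ψ)` for all `ψ ∈ M`, and `(E_δ, F_δ)` is the solution of the QR mixed
problem for each `δ > 0`, then `E_{δₙ} → E` and `F_{δₙ} → 0` in `H` for any positive
sequence `δₙ → 0`. -/
theorem qr_convergence
    {H : Type*} [NormedAddCommGroup H] [InnerProductSpace ℂ H] [CompleteSpace H]
    (V₀ M : Submodule ℂ H)
    (hV₀ : IsClosed (V₀ : Set H)) (hM : IsClosed (M : Set H))
    (a : H → H → ℂ)
    (ha_lin : ∀ (c : ℂ) (u u' v : H), v ∈ M → a (c • u + u') v = c * a u v + a u' v)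
    (ha_conj : ∀ (c : ℂ) (u v v' : H), v ∈ M → v' ∈ M →
      a u (c • v + v') = conj c * a u v + a u v')
    (ha_bdd : ∃ C : ℝ, ∀ (u v : H), v ∈ M → ‖a u v‖ ≤ C * ‖u‖ * ‖v‖)
    (ℓ : H → ℂ)
    (hℓ_conj : ∀ (c : ℂ) (v w : H), v ∈ M → w ∈ M → ℓ (c • v + w) = conj c * ℓ v + ℓ w)
    (hℓ_bdd : ∃ C : ℝ, ∀ v ∈ M, ‖ℓ v‖ ≤ C * ‖v‖)
    (U E : H)
    (hE_mem : E - U ∈ V₀)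
    (hE_eq : ∀ ψ ∈ M, a E ψ = ℓ ψ)
    (hE_unique : ∀ E' : H, E' - U ∈ V₀ → (∀ ψ ∈ M, a E' ψ = ℓ ψ) → E' = E)
    (sol : ℝ → H × H)
    (hsol : ∀ δ : ℝ, 0 < δ →
      ((sol δ).1 - U ∈ V₀ ∧ (sol δ).2 ∈ M) ∧
      (∀ φ ∈ V₀, (δ : ℂ) * ⟪φ, (sol δ).1⟫ + conj (a φ (sol δ).2) = 0) ∧
      (∀ ψ ∈ M, a (sol δ).1 ψ - ⟪ψ, (sol δ).2⟫ = ℓ ψ))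
    (δn : ℕ → ℝ) (hδn_pos : ∀ n, 0 < δn n)
    (hδn_lim : Tendsto δn atTop (𝓝 0)) :
    Tendsto (fun n => (sol (δn n)).1) atTop (𝓝 E) ∧
    Tendsto (fun n => (sol (δn n)).2) atTop (𝓝 (0 : H)) := by
  have : CompleteSpace V₀ := hV₀.completeSpace_coe
  obtain ⟨C, hC⟩ := ha_bdd
  have ha (ψ : H) (hψ : ψ ∈ M) : IsBoundedLinearMap ℂ (a · ψ) :=
    isBoundedLinearMap_of_map_smul_add (ha_lin · · · ψ hψ) (C * ‖ψ‖) fun u =>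
      (hC u ψ hψ).trans_eq (mul_right_comm _ _ _)
  have h_sol (n : ℕ) : IsQRSolution V₀ M a ℓ U (δn n) (sol (δn n)).1 (sol (δn n)).2 :=
    have ⟨⟨h_sub, h_mem⟩, h_stat, h_constr⟩ := hsol (δn n) (hδn_pos n)
    ⟨h_sub, h_mem, h_stat, h_constr⟩
  exact qr_convergence_general ha ⟨hE_mem, hE_eq⟩ (fun E' h => hE_unique E' h.sub_mem h.form_eq)
    hδn_pos hδn_lim h_sol
end

section
/- Suppose there exists E ∈ W with γ₀E = f and a(E, ψ) = ℓ(ψ) for all ψ ∈ M. Let δ, ν, η > 0 and let (E_β, F_β) ∈ W × M be a solution of the RR-QR problem. Then the orthogonality relation δ p(E_β, E_β − E) + ν⟨γ₁E_β, γ₁(E_β − E)⟩_{L₁} + η²‖γ₀E_β − f‖_{L₀}² + ‖F_β‖_W² = 0 holds, and consequently ‖E_β‖_W ≤ (max(δ,ν)/min(δ,ν)) ‖E‖_W. -/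
open ComplexConjugate

local notation "⟪" x ", " y "⟫" => @inner ℂ _ _ x y

/-!
Testing the first RR-QR equation with `φ = E_β - E` and the second with `ψ = F_β` gives the
orthogonality relation: the trace term becomes a square because `γ₀ E = f`, and
`a (E_β - E) F_β = ‖F_β‖²` because `E` satisfies the equation without the relaxation. With
`B = δ p + ν ⟨γ₁ ·, γ₁ ·⟩` the relation says `B(E_β, E_β - E) ≤ 0`, so `B(E_β, E_β) ≤ B(E, E)` by
polarization. Finally `B` lies between `min δ ν` and `max δ ν` times the inner product of `W`, which
bounds `‖E_β‖` by `√(max δ ν / min δ ν) ‖E‖`; this ratio is at least `1`, so it dominates its square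
root.
-/

section SesquilinearForms

variable {𝕜 W : Type*} [RCLike 𝕜] [AddCommGroup W] [Module 𝕜 W]

/-- The form `B v u = p u v`, for a Hermitian `p` that is linear in its first variable: Mathlib's
sesquilinear maps are linear in the second variable. -/
def flippedHermitianForm (p : W → W → 𝕜)
    (hp_lin : ∀ (c : 𝕜) (u u' v : W), p (c • u + u') v = c * p u v + p u' v)
    (hp_herm : ∀ u v : W, p v u = conj (p u v)) : W →ₗ⋆[𝕜] W →ₗ[𝕜] 𝕜 :=
  have p_add (u u' v : W) : p (u + u') v = p u v + p u' v := by simpa using hp_lin 1 u u' v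
  have p_zero (v : W) : p 0 v = 0 := by simpa using p_add 0 0 v
  have p_smul (c : 𝕜) (u v : W) : p (c • u) v = c * p u v := by
    simpa [p_zero] using hp_lin c u 0 v
  LinearMap.mk₂'ₛₗ (starRingEnd 𝕜) (RingHom.id 𝕜) (fun v u ↦ p u v)
    (fun v v' u ↦ by rw [hp_herm, p_add, map_add, ← hp_herm, ← hp_herm])
    (fun c v u ↦ by rw [hp_herm, p_smul, map_mul, ← hp_herm, smul_eq_mul])
    (fun v u u' ↦ p_add u u' v)
    (fun c v u ↦ p_smul c u v)

open scoped ComplexOrder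

variable {B : W →ₗ⋆[𝕜] W →ₗ[𝕜] 𝕜}

theorem re_apply_self_nonneg (hB : B.IsPosSemidef) (u : W) : 0 ≤ RCLike.re (B u u) :=
  (RCLike.nonneg_iff.1 (hB.isNonneg.nonneg u)).1

theorem isPosSemidef_of_isSymm_of_re_nonneg (hB : B.IsSymm)
    (hpos : ∀ u, 0 ≤ RCLike.re (B u u)) : B.IsPosSemidef where
  isSymm := hB
  isNonneg := ⟨fun u ↦ RCLike.nonneg_iff.2 ⟨hpos u, RCLike.conj_eq_iff_im.1 (hB.eq u u)⟩⟩

theorem isPosSemidef_flippedHermitianForm {p : W → W → 𝕜}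
    (hp_lin : ∀ (c : 𝕜) (u u' v : W), p (c • u + u') v = c * p u v + p u' v)
    (hp_herm : ∀ u v : W, p v u = conj (p u v)) (hp_pos : ∀ u, 0 ≤ RCLike.re (p u u)) :
    (flippedHermitianForm p hp_lin hp_herm).IsPosSemidef :=
  isPosSemidef_of_isSymm_of_re_nonneg ⟨fun u v ↦ (hp_herm v u).symm⟩ hp_pos

theorem two_mul_re_apply_sub_self (hB : B.IsSymm) (u v : W) :
    2 * RCLike.re (B (u - v) u) =
      RCLike.re (B u u) - RCLike.re (B v v) + RCLike.re (B (u - v) (u - v)) := by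
  have re_comm : RCLike.re (B u v) = RCLike.re (B v u) := by rw [← hB.eq u v, RCLike.conj_re]
  simp only [map_sub, LinearMap.sub_apply, re_comm]
  ring

theorem re_apply_self_le_of_re_apply_sub_nonpos (hB : B.IsPosSemidef) {u v : W}
    (h : RCLike.re (B (u - v) u) ≤ 0) : RCLike.re (B u u) ≤ RCLike.re (B v v) := by
  linarith [two_mul_re_apply_sub_self hB.isSymm u v, re_apply_self_nonneg hB (u - v)]

end SesquilinearForms

section WeightedForm

open scoped ComplexOrder

variable {𝕜 W L₁ : Type*} [RCLike 𝕜]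
  [SeminormedAddCommGroup L₁] [InnerProductSpace 𝕜 L₁]

/-- The form `(u, v) ↦ δ p(u, v) + ν ⟨γ₁ u, γ₁ v⟩`, whose diagonal is the energy penalized by
the regularization terms of the RR-QR problem. -/
def weightedForm [AddCommGroup W] [Module 𝕜 W] (p : W →ₗ⋆[𝕜] W →ₗ[𝕜] 𝕜) (γ₁ : W →ₗ[𝕜] L₁)
    (δ ν : ℝ) : W →ₗ⋆[𝕜] W →ₗ[𝕜] 𝕜 :=
  (δ : 𝕜) • p + (ν : 𝕜) • ((innerₛₗ 𝕜).compl₂ γ₁).comp γ₁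

section Algebraic

variable [AddCommGroup W] [Module 𝕜 W] {p : W →ₗ⋆[𝕜] W →ₗ[𝕜] 𝕜} {γ₁ : W →ₗ[𝕜] L₁} {δ ν : ℝ}

theorem weightedForm_apply (u v : W) :
    weightedForm p γ₁ δ ν u v = δ * p u v + ν * inner 𝕜 (γ₁ u) (γ₁ v) :=
  rfl

theorem re_weightedForm_apply_self (u : W) :
    RCLike.re (weightedForm p γ₁ δ ν u u) = δ * RCLike.re (p u u) + ν * ‖γ₁ u‖ ^ 2 := by
  rw [weightedForm_apply, map_add, RCLike.re_ofReal_mul, RCLike.re_ofReal_mul,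
    inner_self_eq_norm_sq]

theorem isPosSemidef_weightedForm (hp : p.IsPosSemidef) (hδ : 0 ≤ δ) (hν : 0 ≤ ν) :
    (weightedForm p γ₁ δ ν).IsPosSemidef := by
  refine isPosSemidef_of_isSymm_of_re_nonneg ⟨fun u v ↦ ?_⟩ fun u ↦ ?_
  · simp only [weightedForm_apply, map_add, map_mul, RCLike.conj_ofReal, hp.isSymm.eq,
      inner_conj_symm]
  · have hpos : 0 ≤ RCLike.re (p u u) := re_apply_self_nonneg hp u
    rw [re_weightedForm_apply_self]
    positivity

end Algebraic

variable [SeminormedAddCommGroup W] [InnerProductSpace 𝕜 W]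
  {p : W →ₗ⋆[𝕜] W →ₗ[𝕜] 𝕜} {γ₁ : W →ₗ[𝕜] L₁}

theorem norm_sq_eq_re_add_norm_sq
    (hp_compat : ∀ u v, inner 𝕜 u v = p u v + inner 𝕜 (γ₁ u) (γ₁ v)) (u : W) :
    ‖u‖ ^ 2 = RCLike.re (p u u) + ‖γ₁ u‖ ^ 2 := by
  rw [← inner_self_eq_norm_sq (𝕜 := 𝕜) u, hp_compat, map_add, inner_self_eq_norm_sq]

theorem min_mul_norm_sq_le_re_weightedForm (hp : p.IsPosSemidef)
    (hp_compat : ∀ u v, inner 𝕜 u v = p u v + inner 𝕜 (γ₁ u) (γ₁ v)) (δ ν : ℝ) (u : W) :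
    min δ ν * ‖u‖ ^ 2 ≤ RCLike.re (weightedForm p γ₁ δ ν u u) := by
  have hpos : 0 ≤ RCLike.re (p u u) := re_apply_self_nonneg hp u
  rw [re_weightedForm_apply_self, norm_sq_eq_re_add_norm_sq hp_compat, mul_add]
  gcongr
  exacts [min_le_left δ ν, min_le_right δ ν]

theorem re_weightedForm_le_max_mul_norm_sq (hp : p.IsPosSemidef)
    (hp_compat : ∀ u v, inner 𝕜 u v = p u v + inner 𝕜 (γ₁ u) (γ₁ v)) (δ ν : ℝ) (u : W) :
    RCLike.re (weightedForm p γ₁ δ ν u u) ≤ max δ ν * ‖u‖ ^ 2 := by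
  have hpos : 0 ≤ RCLike.re (p u u) := re_apply_self_nonneg hp u
  rw [re_weightedForm_apply_self, norm_sq_eq_re_add_norm_sq hp_compat, mul_add]
  gcongr
  exacts [le_max_left δ ν, le_max_right δ ν]

theorem norm_le_of_re_weightedForm_le (hp : p.IsPosSemidef)
    (hp_compat : ∀ u v, inner 𝕜 u v = p u v + inner 𝕜 (γ₁ u) (γ₁ v)) {δ ν : ℝ}
    (hδ : 0 < δ) (hν : 0 < ν) {u v : W}
    (h : RCLike.re (weightedForm p γ₁ δ ν u u) ≤ RCLike.re (weightedForm p γ₁ δ ν v v)) :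
    ‖u‖ ≤ √(max δ ν / min δ ν) * ‖v‖ := by
  have hmin : 0 < min δ ν := lt_min hδ hν
  have hsq : min δ ν * ‖u‖ ^ 2 ≤ max δ ν * ‖v‖ ^ 2 :=
    calc
      min δ ν * ‖u‖ ^ 2 ≤ RCLike.re (weightedForm p γ₁ δ ν u u) :=
        min_mul_norm_sq_le_re_weightedForm hp hp_compat δ ν u
      _ ≤ RCLike.re (weightedForm p γ₁ δ ν v v) := h
      _ ≤ max δ ν * ‖v‖ ^ 2 := re_weightedForm_le_max_mul_norm_sq hp hp_compat δ ν v
  rw [← Real.sqrt_sq (norm_nonneg v), ← Real.sqrt_mul' _ (sq_nonneg ‖v‖)]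
  apply Real.le_sqrt_of_sq_le
  rwa [div_mul_eq_mul_div, le_div_iff₀' hmin]

end WeightedForm

section RRQR

open scoped ComplexOrder

variable {𝕜 W L₀ L₁ : Type*} [RCLike 𝕜]
  [SeminormedAddCommGroup W] [InnerProductSpace 𝕜 W]
  [SeminormedAddCommGroup L₀] [InnerProductSpace 𝕜 L₀]
  [SeminormedAddCommGroup L₁] [InnerProductSpace 𝕜 L₁]

/-- `(Eβ, Fβ)` solves the relaxed regularized quasi-reversibility (RR-QR) problem with parameters
`β = (δ, ν, η)`. The form `p` is linear in its second variable, so `p φ Eβ` is the paper's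
`p(E_β, φ)`; `a` and `ℓ` matter only on the test set `M`. -/
structure IsRRQRSolution (γ₀ : W →ₗ[𝕜] L₀) (γ₁ : W →ₗ[𝕜] L₁) (p : W →ₗ⋆[𝕜] W →ₗ[𝕜] 𝕜)
    (M : Set W) (a : W → W → 𝕜) (f : L₀) (ℓ : W → 𝕜) (δ ν η : ℝ) (Eβ Fβ : W) : Prop where
  mem : Fβ ∈ M
  primal : ∀ φ : W, (δ : 𝕜) * p φ Eβ + (ν : 𝕜) * inner 𝕜 (γ₁ φ) (γ₁ Eβ) +
    (η : 𝕜) ^ 2 * inner 𝕜 (γ₀ φ) (γ₀ Eβ - f) + conj (a φ Fβ) = 0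
  dual : ∀ ψ ∈ M, a Eβ ψ - inner 𝕜 ψ Fβ = ℓ ψ

namespace IsRRQRSolution

variable {γ₀ : W →ₗ[𝕜] L₀} {γ₁ : W →ₗ[𝕜] L₁} {p : W →ₗ⋆[𝕜] W →ₗ[𝕜] 𝕜} {M : Set W}
  {a : W → W → 𝕜} {f : L₀} {ℓ : W → 𝕜} {δ ν η : ℝ} {Eβ Fβ E : W}

theorem apply_sub_eq_norm_sq (h : IsRRQRSolution γ₀ γ₁ p M a f ℓ δ ν η Eβ Fβ)
    (ha_lin : ∀ (c : 𝕜) (u u' v : W), v ∈ M → a (c • u + u') v = c * a u v + a u' v)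
    (hE_eq : ∀ ψ ∈ M, a E ψ = ℓ ψ) : a (Eβ - E) Fβ = (‖Fβ‖ : 𝕜) ^ 2 := by
  have a_sub : a (Eβ - E) Fβ = a Eβ Fβ - a E Fβ := by
    simpa only [neg_one_smul, neg_one_mul, neg_add_eq_sub] using ha_lin (-1) E Eβ Fβ h.mem
  rw [a_sub, hE_eq Fβ h.mem, ← h.dual Fβ h.mem, sub_sub_cancel, inner_self_eq_norm_sq_to_K]

theorem orthogonality (h : IsRRQRSolution γ₀ γ₁ p M a f ℓ δ ν η Eβ Fβ)
    (ha_lin : ∀ (c : 𝕜) (u u' v : W), v ∈ M → a (c • u + u') v = c * a u v + a u' v)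
    (hE_trace : γ₀ E = f) (hE_eq : ∀ ψ ∈ M, a E ψ = ℓ ψ) :
    (δ : 𝕜) * p (Eβ - E) Eβ + (ν : 𝕜) * inner 𝕜 (γ₁ (Eβ - E)) (γ₁ Eβ) +
      ((η ^ 2 * ‖γ₀ Eβ - f‖ ^ 2 : ℝ) : 𝕜) + ((‖Fβ‖ ^ 2 : ℝ) : 𝕜) = 0 := by
  have htest := h.primal (Eβ - E)
  rw [map_sub γ₀, hE_trace, inner_self_eq_norm_sq_to_K, h.apply_sub_eq_norm_sq ha_lin hE_eq,
    map_pow, RCLike.conj_ofReal] at htest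
  exact_mod_cast htest

theorem re_weightedForm_sub_nonpos (h : IsRRQRSolution γ₀ γ₁ p M a f ℓ δ ν η Eβ Fβ)
    (ha_lin : ∀ (c : 𝕜) (u u' v : W), v ∈ M → a (c • u + u') v = c * a u v + a u' v)
    (hE_trace : γ₀ E = f) (hE_eq : ∀ ψ ∈ M, a E ψ = ℓ ψ) :
    RCLike.re (weightedForm p γ₁ δ ν (Eβ - E) Eβ) ≤ 0 := by
  have hre := congrArg RCLike.re (h.orthogonality ha_lin hE_trace hE_eq)
  rw [← weightedForm_apply, map_add, map_add, RCLike.ofReal_re, RCLike.ofReal_re, map_zero] at hre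
  have hres : 0 ≤ η ^ 2 * ‖γ₀ Eβ - f‖ ^ 2 + ‖Fβ‖ ^ 2 := by positivity
  linarith

end IsRRQRSolution

theorem rrqr_orthogonality_general (γ₀ : W →ₗ[𝕜] L₀) (γ₁ : W →ₗ[𝕜] L₁)
    (p : W →ₗ⋆[𝕜] W →ₗ[𝕜] 𝕜) (hp : p.IsPosSemidef)
    (hp_compat : ∀ u v, inner 𝕜 u v = p u v + inner 𝕜 (γ₁ u) (γ₁ v))
    (M : Set W) (a : W → W → 𝕜)
    (ha_lin : ∀ (c : 𝕜) (u u' v : W), v ∈ M → a (c • u + u') v = c * a u v + a u' v)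
    (f : L₀) (ℓ : W → 𝕜) (E : W) (hE_trace : γ₀ E = f) (hE_eq : ∀ ψ ∈ M, a E ψ = ℓ ψ)
    (δ ν η : ℝ) (hδ : 0 < δ) (hν : 0 < ν) (Eβ Fβ : W)
    (h : IsRRQRSolution γ₀ γ₁ p M a f ℓ δ ν η Eβ Fβ) :
    (δ : 𝕜) * p (Eβ - E) Eβ + (ν : 𝕜) * inner 𝕜 (γ₁ (Eβ - E)) (γ₁ Eβ) +
      ((η ^ 2 * ‖γ₀ Eβ - f‖ ^ 2 : ℝ) : 𝕜) + ((‖Fβ‖ ^ 2 : ℝ) : 𝕜) = 0 ∧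
    ‖Eβ‖ ≤ √(max δ ν / min δ ν) * ‖E‖ := by
  refine ⟨h.orthogonality ha_lin hE_trace hE_eq,
    norm_le_of_re_weightedForm_le hp hp_compat hδ hν ?_⟩
  exact re_apply_self_le_of_re_apply_sub_nonpos (isPosSemidef_weightedForm hp hδ.le hν.le)
    (h.re_weightedForm_sub_nonpos ha_lin hE_trace hE_eq)

end RRQR

theorem sqrt_max_div_min_le {δ ν : ℝ} (hδ : 0 < δ) (hν : 0 < ν) :
    √(max δ ν / min δ ν) ≤ max δ ν / min δ ν :=
  Real.sqrt_le_self_iff.2 (.inr ((one_le_div (lt_min hδ hν)).2 min_le_max))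

/-- orthogonality relation for the RR-QR problem,
`δ p(E_β, E_β − E) + ν⟨γ₁E_β, γ₁(E_β − E)⟩ + η²‖γ₀E_β − f‖² + ‖F_β‖² = 0`,
and the resulting bound `‖E_β‖_W ≤ (max(δ,ν)/min(δ,ν)) ‖E‖_W`. -/
theorem rrqr_orthogonality
    {W L₀ L₁ : Type*} [NormedAddCommGroup W] [InnerProductSpace ℂ W] [CompleteSpace W]
    [NormedAddCommGroup L₀] [InnerProductSpace ℂ L₀] [CompleteSpace L₀]
    [NormedAddCommGroup L₁] [InnerProductSpace ℂ L₁] [CompleteSpace L₁]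
    (γ₀ : W →L[ℂ] L₀) (γ₁ : W →L[ℂ] L₁)
    (p : W → W → ℂ)
    (hp_lin : ∀ (c : ℂ) (u u' v : W), p (c • u + u') v = c * p u v + p u' v)
    (hp_herm : ∀ u v : W, p v u = conj (p u v))
    (hp_pos : ∀ u : W, 0 ≤ (p u u).re)
    (hp_bdd : ∃ C : ℝ, ∀ u v : W, ‖p u v‖ ≤ C * ‖u‖ * ‖v‖)
    (hp_compat : ∀ u v : W, (⟪v, u⟫ : ℂ) = p u v + ⟪γ₁ v, γ₁ u⟫)
    (M : Submodule ℂ W) (hM : IsClosed (M : Set W))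
    (a : W → W → ℂ)
    (ha_lin : ∀ (c : ℂ) (u u' v : W), v ∈ M → a (c • u + u') v = c * a u v + a u' v)
    (ha_conj : ∀ (c : ℂ) (u v v' : W), v ∈ M → v' ∈ M →
      a u (c • v + v') = conj c * a u v + a u v')
    (ha_bdd : ∃ C : ℝ, ∀ (u v : W), v ∈ M → ‖a u v‖ ≤ C * ‖u‖ * ‖v‖)
    (f : L₀)
    (ℓ : W → ℂ)
    (hℓ_conj : ∀ (c : ℂ) (v w : W), v ∈ M → w ∈ M → ℓ (c • v + w) = conj c * ℓ v + ℓ w)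
    (hℓ_bdd : ∃ C : ℝ, ∀ v ∈ M, ‖ℓ v‖ ≤ C * ‖v‖)
    (E : W) (hE_trace : γ₀ E = f) (hE_eq : ∀ ψ ∈ M, a E ψ = ℓ ψ)
    (δ ν η : ℝ) (hδ : 0 < δ) (hν : 0 < ν) (hη : 0 < η)
    (Eβ Fβ : W) (hFβ_mem : Fβ ∈ M)
    (h_eq1 : ∀ φ : W, (δ : ℂ) * p Eβ φ + (ν : ℂ) * ⟪γ₁ φ, γ₁ Eβ⟫ +
      (η : ℂ) ^ 2 * ⟪γ₀ φ, γ₀ Eβ - f⟫ + conj (a φ Fβ) = 0)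
    (h_eq2 : ∀ ψ ∈ M, a Eβ ψ - ⟪ψ, Fβ⟫ = ℓ ψ) :
    (δ : ℂ) * p Eβ (Eβ - E) + (ν : ℂ) * ⟪γ₁ (Eβ - E), γ₁ Eβ⟫ +
      ((η ^ 2 * ‖γ₀ Eβ - f‖ ^ 2 : ℝ) : ℂ) + ((‖Fβ‖ ^ 2 : ℝ) : ℂ) = 0 ∧
    ‖Eβ‖ ≤ (max δ ν / min δ ν) * ‖E‖ := by
  have ⟨horth, hbound⟩ := rrqr_orthogonality_general (γ₀ : W →ₗ[ℂ] L₀) (γ₁ : W →ₗ[ℂ] L₁) _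
    (isPosSemidef_flippedHermitianForm hp_lin hp_herm hp_pos) (fun v u ↦ hp_compat u v) M a ha_lin
    f ℓ E hE_trace hE_eq δ ν η hδ hν Eβ Fβ ⟨hFβ_mem, h_eq1, h_eq2⟩
  exact ⟨horth, hbound.trans (by gcongr; exact sqrt_max_div_min_le hδ hν)⟩
end
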